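/- Let n ≥ 5. The centralizer in A[B_n] of the subgroup generated by t_0, t_1, …, t_{n−1} is equal to the center of A[B_n]. -/

import Mathlib

/-- The defining relators of the Artin group of type `Bₙ`, as elements of the free
group on `n` generators (0-indexed: generator `i` corresponds to `r_{i+1}`). -/
def BnRels (n : ℕ) : Set (FreeGroup (Fin n)) :=
  {w | (∃ i j : Fin n, (i : ℕ) + 1 = (j : ℕ) ∧ (j : ℕ) + 1 < n ∧
          w = FreeGroup.of i * FreeGroup.of j * FreeGroup.of i *
              (FreeGroup.of j * FreeGroup.of i * FreeGroup.of j)⁻¹) ∨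
       (∃ i j : Fin n, (i : ℕ) + 2 = n ∧ (j : ℕ) + 1 = n ∧
          w = FreeGroup.of i * FreeGroup.of j * FreeGroup.of i * FreeGroup.of j *
              (FreeGroup.of j * FreeGroup.of i * FreeGroup.of j * FreeGroup.of i)⁻¹) ∨
       (∃ i j : Fin n, (i : ℕ) + 2 ≤ (j : ℕ) ∧
          w = FreeGroup.of i * FreeGroup.of j * (FreeGroup.of j * FreeGroup.of i)⁻¹)}

/-- The Artin group `A[Bₙ]` of type `Bₙ`. -/
abbrev ArtinB (n : ℕ) := PresentedGroup (BnRels n)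

/-- The standard generator `r_i` (1-indexed, `1 ≤ i ≤ n`). -/
def rB (n i : ℕ) : ArtinB n :=
  if h : i - 1 < n then PresentedGroup.of ⟨i - 1, h⟩ else 1

/-- `ρ_B = r_1 r_2 ⋯ r_n`. -/
def ρB (n : ℕ) : ArtinB n := ((List.range n).map fun i => rB n (i + 1)).prod

/-- `Δ_B = ρ_B ^ n`, the generator of the center. -/
def ΔB (n : ℕ) : ArtinB n := ρB n ^ n

/-- `t_i` for `i` read modulo `n`: `t_i = r_i` for `1 ≤ i ≤ n-1`,
and `t_0 = ρ_B r_{n-1} ρ_B⁻¹`. -/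
def tB (n i : ℕ) : ArtinB n :=
  if i % n = 0 then ρB n * rB n (n - 1) * (ρB n)⁻¹ else rB n (i % n)

/-- `Δ_Y = (t_1⋯t_{n-1})(t_1⋯t_{n-2})⋯(t_1t_2)t_1`, the Garside element of the
parabolic subgroup of type `A_{n-1}`. -/
def ΔY (n : ℕ) : ArtinB n :=
  ((List.range (n - 1)).map fun k =>
    ((List.range (n - 1 - k)).map fun i => rB n (i + 1)).prod).prod

/-- `ρ_0 = t_1 t_2 ⋯ t_{n-1}`. -/
def ρ₀B (n : ℕ) : ArtinB n := ((List.range (n - 1)).map fun i => rB n (i + 1)).prod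

/-- `ρ_1 = t_1⁻¹ t_2⁻¹ ⋯ t_{n-1}⁻¹`. -/
def ρ₁B (n : ℕ) : ArtinB n := ((List.range (n - 1)).map fun i => (rB n (i + 1))⁻¹).prod

/-- `ρ_k` for `k ∈ {0,1}`. -/
def ρkB (n k : ℕ) : ArtinB n := if k = 0 then ρ₀B n else ρ₁B n

/-- `v_k = ρ_k t_{n-1} ρ_k⁻¹` for `k ∈ {0,1}`. -/
def vB (n k : ℕ) : ArtinB n := ρkB n k * rB n (n - 1) * (ρkB n k)⁻¹

/-- `δ = r_{n-1} r_{n-2} ⋯ r_2 r_1² r_2 ⋯ r_{n-2} r_{n-1}`. -/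
def δB (n : ℕ) : ArtinB n :=
  ((List.range (n - 2)).map fun i => rB n (n - 1 - i)).prod * rB n 1 ^ 2 *
  ((List.range (n - 2)).map fun i => rB n (i + 2)).prod

/-- The quotient `Ā = A[Bₙ]/Z(A[Bₙ])`. -/
abbrev AbarB (n : ℕ) := ArtinB n ⧸ Subgroup.center (ArtinB n)

/-- The canonical projection `π : A[Bₙ] → Ā`. -/
def πB (n : ℕ) : ArtinB n →* AbarB n := QuotientGroup.mk' (Subgroup.center (ArtinB n))

/-- `t̄_i = π(t_i)`. -/
def tbar (n i : ℕ) : AbarB n := πB n (tB n i)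

/-- `ρ̄_B = π(ρ_B)`. -/
def ρbar (n : ℕ) : AbarB n := πB n (ρB n)

/-- The composition `conj_x ∘ φ` of an endomorphism with an inner automorphism. -/
def conjComp {G : Type*} [Group G] (x : G) (φ : G →* G) : G →* G :=
  (MulAut.conj x).toMonoidHom.comp φ

/-- Type (1): there are commuting `g, h` with `φ(t_i) = g` for all `0 ≤ i ≤ n-1`
and `φ(ρ_B) = h`. -/
def IsType1 (n : ℕ) (φ : ArtinB n →* ArtinB n) : Prop :=
  ∃ g h : ArtinB n, g * h = h * g ∧ (∀ i < n, φ (tB n i) = g) ∧ φ (ρB n) = h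

/-- Type (2a) with parameters `ε ∈ {1,-1}`, `p q : ℤ`. -/
def IsType2a (n : ℕ) (ε p q : ℤ) (φ : ArtinB n →* ArtinB n) : Prop :=
  (ε = 1 ∨ ε = -1) ∧ (∀ i < n, φ (tB n i) = tB n i ^ ε * ΔB n ^ p) ∧
    φ (ρB n) = ρB n * ΔB n ^ q

/-- Type (2b) with parameters `ε ∈ {1,-1}`, `p q : ℤ`. -/
def IsType2b (n : ℕ) (ε p q : ℤ) (φ : ArtinB n →* ArtinB n) : Prop :=
  (ε = 1 ∨ ε = -1) ∧ (∀ i < n, φ (tB n i) = tB n (n - i) ^ ε * ΔB n ^ p) ∧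
    φ (ρB n) = (ρB n)⁻¹ * ΔB n ^ q

/-- Type (3) with parameters `ε ∈ {1,-1}`, `k ∈ {0,1}`, `p q r s : ℤ`. -/
def IsType3 (n : ℕ) (ε : ℤ) (k : ℕ) (p q r s : ℤ) (φ : ArtinB n →* ArtinB n) : Prop :=
  (ε = 1 ∨ ε = -1) ∧ (k = 0 ∨ k = 1) ∧
    (∀ i, 1 ≤ i → i ≤ n - 1 → φ (tB n i) = tB n i ^ ε * ΔY n ^ (2 * p) * ΔB n ^ q) ∧
    φ (tB n 0) = vB n k ^ ε * ΔY n ^ (2 * p) * ΔB n ^ q ∧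
    φ (ρB n) = ρkB n k * ΔY n ^ (2 * r) * ΔB n ^ s

/-!
Write `N = ⟨t_0, …, t_{n-1}⟩`. Conjugation by `r_n` preserves `N`, so `N` is normal, and hence so is
its centralizer. If `g` centralizes `N`, then the commutator `u = [g, r_n]` therefore centralizes
`N` as well; moreover `u` lies in the normal closure of `r_n`. That normal closure is a free group
on the conjugates `x_k` of `x_0 = r_n`, on which the braid group `⟨r_1, …, r_{n-1}⟩` acts by Artin's
automorphisms. Inside it `u` commutes with the elements `x_0 x_1⁻¹` and `x_1⁻¹ x_0` of `N`, and no
nontrivial reduced word commutes with both: the first forces its first letter to be `x_0` or `x_1`,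
the second forces it to be `x_0⁻¹` or `x_1⁻¹`. So `g` commutes with `r_n`, and it commutes with the
other generators because they lie in `N`.
-/

section FreeGroup

open FreeGroup

variable {ι : Type*} [DecidableEq ι]

/- As `w * u = u * w` has length `|w| + |u|`, the product `u * w` does not cancel either. -/
theorem toWord_append_comm_of_commute {u w : FreeGroup ι} (h : Commute w u)
    (hred : IsReduced (w.toWord ++ u.toWord)) :
    w.toWord ++ u.toWord = u.toWord ++ w.toWord := by
  have hwu : (u * w).toWord = w.toWord ++ u.toWord := by
    rw [← h.eq, toWord_mul, hred.reduce_eq]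
  rw [← hwu]
  exact (toWord_mul_sublist u w).eq_of_length (by simp [hwu, add_comm])

theorem head?_toWord_of_commute_mk_pair {p q : ι × Bool} (hpq : p.1 ≠ q.1) {u : FreeGroup ι}
    (h : Commute (FreeGroup.mk [p, q]) u) {l : ι × Bool} (hl : l ∈ u.toWord.head?) :
    l = p ∨ l = (q.1, !q.2) := by
  obtain ⟨L, hL⟩ := List.head?_eq_some_iff.1 hl
  by_contra! hne
  have hw : (FreeGroup.mk [p, q]).toWord = [p, q] := by
    rw [toWord_mk, IsReduced.reduce_eq (by simp [hpq])]
  have hql : q.1 = l.1 → q.2 = l.2 := fun e => by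
    by_contra hs
    exact hne.2 (Prod.ext e.symm (Bool.eq_not_of_ne (Ne.symm hs)))
  have hlL : IsReduced (l :: L) := hL ▸ isReduced_toWord
  have happ := toWord_append_comm_of_commute h (by simpa [hw, hL, hpq, hlL] using hql)
  rw [hw, hL] at happ
  exact hne.1 (List.cons.inj happ).1.symm

omit [DecidableEq ι] in
theorem eq_one_of_commute_of_mul_inv {a b : ι} (hab : a ≠ b) {u : FreeGroup ι}
    (h : Commute (of a * (of b)⁻¹) u) (h' : Commute ((of b)⁻¹ * of a) u) : u = 1 := by
  classical
  rw [← toWord_eq_nil_iff, ← List.head?_eq_none_iff, Option.eq_none_iff_forall_not_mem]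
  intro l hl
  have hpos : l = (a, true) ∨ l = (b, true) := head?_toWord_of_commute_mk_pair hab h hl
  have hneg : l = (b, false) ∨ l = (a, false) := head?_toWord_of_commute_mk_pair hab.symm h' hl
  rcases hpos with rfl | rfl <;> simp at hneg

omit [DecidableEq ι] in
theorem mulAut_freeGroup_ext {f g : MulAut (FreeGroup ι)} (h : ∀ k, f (of k) = g (of k)) :
    f = g :=
  MulEquiv.toMonoidHom_injective (ext_hom _ _ h)

/-- Artin's automorphism of the free group attached to an ordered pair of basis elements:
`x_i ↦ x_j` and `x_j ↦ x_j⁻¹ x_i x_j`, the other basis elements being fixed. The braid generator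
`σ_i` acts by `artinAut i (i + 1)`. -/
def artinAut (i j : ι) : MulAut (FreeGroup ι) :=
  MonoidHom.toMulEquiv
    (FreeGroup.lift fun k =>
      if k = i then of j else if k = j then (of j)⁻¹ * of i * of j else of k)
    (FreeGroup.lift fun k =>
      if k = i then of i * of j * (of i)⁻¹ else if k = j then of i else of k)
    (by ext k; by_cases hi : k = i <;> by_cases hj : k = j <;> simp_all [mul_assoc])
    (by ext k; by_cases hi : k = i <;> by_cases hj : k = j <;> simp_all [mul_assoc])

theorem artinAut_left (i j : ι) : artinAut i j (of i) = of j := by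
  simp [artinAut]

theorem artinAut_right (i j : ι) : artinAut i j (of j) = (of j)⁻¹ * of i * of j := by
  by_cases h : j = i <;> simp [artinAut, h]

theorem artinAut_of_ne {i j k : ι} (hi : k ≠ i) (hj : k ≠ j) : artinAut i j (of k) = of k := by
  simp [artinAut, hi, hj]

theorem artinAut_braid {i j k : ι} (hij : i ≠ j) (hjk : j ≠ k) (hik : i ≠ k) :
    artinAut i j * artinAut j k * artinAut i j = artinAut j k * artinAut i j * artinAut j k := by
  refine mulAut_freeGroup_ext fun l => ?_
  have hi : artinAut j k (of i) = of i := artinAut_of_ne hij hik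
  have hk : artinAut i j (of k) = of k := artinAut_of_ne hik.symm hjk.symm
  simp only [MulAut.mul_apply]
  rcases eq_or_ne l i with rfl | hli
  · simp [artinAut_left, hi, hk]
  rcases eq_or_ne l j with rfl | hlj
  · simp [artinAut_left, artinAut_right, hi, hk]
  rcases eq_or_ne l k with rfl | hlk
  · simp [artinAut_left, artinAut_right, hi, hk, mul_assoc]
  · simp [artinAut_of_ne, *]

theorem artinAut_commute {i j k l : ι} (hik : i ≠ k) (hil : i ≠ l) (hjk : j ≠ k) (hjl : j ≠ l) :
    Commute (artinAut i j) (artinAut k l) := by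
  refine mulAut_freeGroup_ext fun m => ?_
  simp only [MulAut.mul_apply]
  rcases eq_or_ne m i with rfl | hmi
  · simp [artinAut_left, artinAut_of_ne, *]
  rcases eq_or_ne m j with rfl | hmj
  · simp [artinAut_right, artinAut_of_ne, *]
  rcases eq_or_ne m k with rfl | hmk
  · simp [artinAut_left, artinAut_of_ne, hik.symm, hil.symm, hjk.symm, hjl.symm]
  rcases eq_or_ne m l with rfl | hml
  · simp [artinAut_right, artinAut_of_ne, hik.symm, hil.symm, hjk.symm, hjl.symm]
  · simp [artinAut_of_ne, *]

end FreeGroup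

section Group

variable {G : Type*} [Group G]

theorem commute_conj_conj_of_braid {p q x : G} (hpq : p * q * p = q * p * q)
    (hqx : Commute q x) : Commute p (q * (p * x * p⁻¹) * q⁻¹) := by
  have hq : q * p * q * (q * p)⁻¹ = p := by rw [← hpq]; group
  have hx : q * p * x * (q * p)⁻¹ = q * (p * x * p⁻¹) * q⁻¹ := by group
  simpa only [hq, hx] using (Commute.conj_iff (q * p)).2 hqx

theorem four_conj_of_braid {p q x : G} (hxp : x * p * x * p = p * x * p * x)
    (hpq : p * q * p = q * p * q) (hqx : Commute q x) :
    p * x * p⁻¹ * q * (p * x * p⁻¹) * q = q * (p * x * p⁻¹) * q * (p * x * p⁻¹) := by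
  have hx : MulAut.conj (p * q) x = p * x * p⁻¹ := by
    rw [MulAut.conj_apply, mul_assoc p, hqx.eq]
    group
  have hp : MulAut.conj (p * q) p = q := by
    rw [MulAut.conj_apply, hpq]
    group
  have hconj := congrArg (MulAut.conj (p * q)) hxp
  generalize MulAut.conj (p * q) = f at hx hp hconj
  simpa only [map_mul, hx, hp] using hconj

theorem conj_conj_of_four {p x : G} (h : x * p * x * p = p * x * p * x) :
    p * (p * x * p⁻¹) * p⁻¹ = (p * x * p⁻¹)⁻¹ * x * (p * x * p⁻¹) :=
  calc p * (p * x * p⁻¹) * p⁻¹ = p * x⁻¹ * p⁻¹ * (p * x * p * x) * p⁻¹ * p⁻¹ := by group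
    _ = p * x⁻¹ * p⁻¹ * (x * p * x * p) * p⁻¹ * p⁻¹ := by rw [h]
    _ = (p * x * p⁻¹)⁻¹ * x * (p * x * p⁻¹) := by group

theorem inv_conj_of_four {p x : G} (h : x * p * x * p = p * x * p * x) :
    p⁻¹ * x * p = x * (p * x * p⁻¹) * x⁻¹ :=
  calc p⁻¹ * x * p = p⁻¹ * (x * p * x * p) * p⁻¹ * x⁻¹ := by group
    _ = p⁻¹ * (p * x * p * x) * p⁻¹ * x⁻¹ := by rw [h]
    _ = x * (p * x * p⁻¹) * x⁻¹ := by group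

theorem mem_normalizer_closure {S : Set G} {g : G}
    (h : ∀ x ∈ S, g * x * g⁻¹ ∈ Subgroup.closure S)
    (h' : ∀ x ∈ S, g⁻¹ * x * g ∈ Subgroup.closure S) :
    g ∈ Subgroup.normalizer (Subgroup.closure S : Set G) := by
  have hle : Subgroup.closure S ≤ (Subgroup.closure S).comap (MulAut.conj g).toMonoidHom :=
    (Subgroup.closure_le _).2 fun x hx => by simpa using h x hx
  have hle' : Subgroup.closure S ≤ (Subgroup.closure S).comap (MulAut.conj g⁻¹).toMonoidHom :=
    (Subgroup.closure_le _).2 fun x hx => by simpa using h' x hx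
  refine Subgroup.mem_normalizer_iff.2 fun x => ⟨fun hx => by simpa using hle hx, fun hx => ?_⟩
  simpa [mul_assoc] using hle' hx

theorem equivariant_of_closure_eq_top {F H : Type*} [Group F] [Group H] {φ : H →* MulAut F}
    {ψ : H →* G} {f : F →* G} {S : Set H} (hS : Subgroup.closure S = ⊤)
    (h : ∀ g ∈ S, ∀ x, f (φ g x) = ψ g * f x * (ψ g)⁻¹) (g : H) (x : F) :
    f (φ g x) = ψ g * f x * (ψ g)⁻¹ := by
  have hg : g ∈ Subgroup.closure S := hS ▸ Subgroup.mem_top g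
  induction hg using Subgroup.closure_induction generalizing x with
  | mem g hg => exact h g hg x
  | one => simp
  | mul g g' _ _ ih ih' => simp [ih, ih', mul_assoc]
  | inv g _ ih =>
    have hx : f x = ψ g * f (φ g⁻¹ x) * (ψ g)⁻¹ := by
      rw [← ih, map_inv, MulAut.apply_inv_self]
    rw [hx, map_inv ψ]
    group

end Group

section TypeB

/-- The elements `b` and `c 0, …, c (n - 2)` satisfy the defining relations of the Artin group of
type `Bₙ`, where `b` plays the role of the special generator `r_n` and `c k` that of
`r_{n - 1 - k}`: counting away from the special generator makes all relations independent of
`n`. -/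
structure IsTypeB {G : Type*} [Group G] (n : ℕ) (b : G) (c : ℕ → G) : Prop where
  four : 1 < n → b * c 0 * b * c 0 = c 0 * b * c 0 * b
  braid : ∀ i, i + 2 < n → c i * c (i + 1) * c i = c (i + 1) * c i * c (i + 1)
  commute_special : ∀ j, j + 2 < n → Commute b (c (j + 1))
  commute : ∀ i j, i + 2 ≤ j → j + 1 < n → Commute (c i) (c j)

variable {G : Type*} [Group G] {n : ℕ} {b : G} {c : ℕ → G}

/-- The conjugates `x_k = (c_{k-1} ⋯ c_0) b (c_{k-1} ⋯ c_0)⁻¹` of the special generator. In the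
Artin group of type `Bₙ` they freely generate the normal closure of the special generator. -/
def conjSeq (b : G) (c : ℕ → G) : ℕ → G
  | 0 => b
  | k + 1 => c k * conjSeq b c k * (c k)⁻¹

/-- The homomorphism `x_k ↦ conjSeq b c k` for `k < n`; the basis elements `x_k` with `n ≤ k`, on
which the braid generators involved act trivially, are sent to `1`. -/
def conjHom (n : ℕ) (b : G) (c : ℕ → G) : FreeGroup ℕ →* G :=
  FreeGroup.lift fun k => if k < n then conjSeq b c k else 1

theorem conjHom_of {k : ℕ} (hk : k < n) : conjHom n b c (FreeGroup.of k) = conjSeq b c k := by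
  simp [conjHom, hk]

theorem conjHom_of_le {k : ℕ} (hk : n ≤ k) : conjHom n b c (FreeGroup.of k) = 1 := by
  simp [conjHom, hk]

namespace IsTypeB

theorem commute_conjSeq_of_lt (h : IsTypeB n b c) {i k : ℕ} (hki : k < i) (hi : i + 1 < n) :
    Commute (c i) (conjSeq b c k) := by
  induction k with
  | zero =>
    obtain ⟨j, rfl⟩ := Nat.exists_eq_add_of_lt hki
    exact h.commute_special _ hi |>.symm
  | succ k ih =>
    have hik : Commute (c i) (c k) := (h.commute k i hki hi).symm
    exact (hik.mul_right (ih (by omega))).mul_right hik.inv_right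

theorem commute_conjSeq_of_gt (h : IsTypeB n b c) {i k : ℕ} (hik : i + 2 ≤ k) (hk : k < n) :
    Commute (c i) (conjSeq b c k) := by
  induction k, hik using Nat.le_induction with
  | base =>
    exact commute_conj_conj_of_braid (h.braid i hk) (h.commute_conjSeq_of_lt i.lt_succ_self hk)
  | succ k hik ih =>
    have hck : Commute (c i) (c k) := h.commute i k hik hk
    exact (hck.mul_right (ih (by omega))).mul_right hck.inv_right

theorem conjSeq_four (h : IsTypeB n b c) {i : ℕ} (hi : i + 1 < n) :
    conjSeq b c i * c i * conjSeq b c i * c i = c i * conjSeq b c i * c i * conjSeq b c i := by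
  induction i with
  | zero => exact h.four hi
  | succ i ih =>
    exact four_conj_of_braid (ih (by omega)) (h.braid i hi)
      (h.commute_conjSeq_of_lt i.lt_succ_self hi)

theorem conjHom_artinAut (h : IsTypeB n b c) {i : ℕ} (hi : i + 1 < n) (x : FreeGroup ℕ) :
    conjHom n b c (artinAut i (i + 1) x) = c i * conjHom n b c x * (c i)⁻¹ := by
  suffices hom : (conjHom n b c).comp (artinAut i (i + 1)).toMonoidHom =
      (MulAut.conj (c i)).toMonoidHom.comp (conjHom n b c) from DFunLike.congr_fun hom x
  ext k
  change conjHom n b c (artinAut i (i + 1) (FreeGroup.of k)) =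
    c i * conjHom n b c (FreeGroup.of k) * (c i)⁻¹
  rcases eq_or_ne k i with rfl | hki
  · rw [artinAut_left, conjHom_of hi, conjHom_of (by omega), conjSeq]
  rcases eq_or_ne k (i + 1) with rfl | hki'
  · rw [artinAut_right, map_mul, map_mul, map_inv, conjHom_of hi, conjHom_of (by omega), conjSeq,
      conj_conj_of_four (h.conjSeq_four hi)]
  rw [artinAut_of_ne hki hki']
  rcases lt_or_ge k n with hk | hk
  · rw [conjHom_of hk, eq_mul_inv_iff_mul_eq]
    rcases lt_or_gt_of_ne hki with hlt | hgt
    · exact (h.commute_conjSeq_of_lt hlt hi).eq.symm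
    · exact (h.commute_conjSeq_of_gt (by omega) hk).eq.symm
  · simp [conjHom_of_le hk]

end IsTypeB

theorem isTypeB_one_artinAut (n : ℕ) :
    IsTypeB n (1 : MulAut (FreeGroup ℕ)) fun k => artinAut k (k + 1) where
  four _ := by simp
  braid i _ := artinAut_braid (by omega) (by omega) (by omega)
  commute_special _ _ := Commute.one_left _
  commute i j hij _ := artinAut_commute (by omega) (by omega) (by omega) (by omega)

end TypeB

namespace ArtinB

variable {G : Type*} [Group G] {n : ℕ}

/-- The generator `r_n` of the Artin group of type `Bₙ`, the one on the quadruple edge. -/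
def special (n : ℕ) : ArtinB n := rB n n

/-- The generator `r_{n - 1 - k}` of the Artin group of type `Bₙ`; for `k + 1 < n` these are the
generators other than `special n`, counted away from it. -/
def braidGen (n k : ℕ) : ArtinB n := rB n (n - 1 - k)

theorem special_eq_of (hn : 0 < n) : special n = PresentedGroup.of ⟨n - 1, by omega⟩ :=
  dif_pos (by omega)

theorem braidGen_eq_of {k : ℕ} (hk : k + 1 < n) :
    braidGen n k = PresentedGroup.of ⟨n - 1 - k - 1, by omega⟩ :=
  dif_pos (by omega)

theorem rB_eq_braidGen {i : ℕ} (hi : i < n) : rB n i = braidGen n (n - 1 - i) := by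
  rw [braidGen, Nat.sub_sub_self (by omega)]

theorem isTypeB (n : ℕ) : IsTypeB n (special n) (braidGen n) where
  four hn := by
    rw [special_eq_of (by omega), braidGen_eq_of hn]
    exact (PresentedGroup.mk_eq_mk_of_mul_inv_mem
      (.inr (.inl ⟨_, _, by grind, by grind, rfl⟩))).symm
  braid i hi := by
    rw [braidGen_eq_of (by omega), braidGen_eq_of hi]
    exact (PresentedGroup.mk_eq_mk_of_mul_inv_mem (.inl ⟨_, _, by grind, by grind, rfl⟩)).symm
  commute_special j hj := by
    rw [special_eq_of (by omega), braidGen_eq_of hj]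
    exact (PresentedGroup.mk_eq_mk_of_mul_inv_mem (.inr (.inr ⟨_, _, by grind, rfl⟩))).symm
  commute i j hij hj := by
    rw [braidGen_eq_of (by omega), braidGen_eq_of hj]
    exact (PresentedGroup.mk_eq_mk_of_mul_inv_mem (.inr (.inr ⟨_, _, by grind, rfl⟩))).symm

theorem closure_special_braidGen (n : ℕ) :
    Subgroup.closure (insert (special n) (braidGen n '' {k | k + 1 < n})) = ⊤ := by
  rw [eq_top_iff, ← PresentedGroup.closure_range_of, Subgroup.closure_le]
  rintro _ ⟨i, rfl⟩
  apply Subgroup.subset_closure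
  rcases eq_or_ne (i : ℕ) (n - 1) with hi | hi
  · left
    rw [special_eq_of (by omega)]
    exact congrArg PresentedGroup.of (Fin.ext hi)
  · right
    refine ⟨n - 2 - i, show _ < n by omega, ?_⟩
    rw [braidGen_eq_of (by omega)]
    congr
    omega

theorem hom_ext {f g : ArtinB n →* G} (hspecial : f (special n) = g (special n))
    (hbraid : ∀ k, k + 1 < n → f (braidGen n k) = g (braidGen n k)) : f = g := by
  apply MonoidHom.eq_of_eqOn_dense (closure_special_braidGen n)
  rintro _ (rfl | ⟨k, hk, rfl⟩)
  · exact hspecial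
  · exact hbraid k hk

/-- The homomorphism out of the Artin group of type `Bₙ` with prescribed values on the
generators. -/
def lift {b : G} {c : ℕ → G} (h : IsTypeB n b c) : ArtinB n →* G :=
  PresentedGroup.toGroup (f := fun i : Fin n => if (i : ℕ) + 1 = n then b else c (n - 2 - i)) (by
    rintro _ (⟨i, j, hij, hj, rfl⟩ | ⟨i, j, hi, hj, rfl⟩ | ⟨i, j, hij, rfl⟩) <;>
      rw [map_mul, map_inv, mul_inv_eq_one]
    · obtain ⟨k, hk⟩ : ∃ k, n - 2 - j = k := ⟨_, rfl⟩
      have hki : n - 2 - i = k + 1 := by omega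
      have hi' : (i : ℕ) + 1 ≠ n := by omega
      simpa [hi', hj.ne, hk, hki] using (h.braid k (by omega)).symm
    · have hi' : (i : ℕ) + 1 ≠ n := by omega
      have hi0 : n - 2 - (i : ℕ) = 0 := by omega
      simpa [hi', hj, hi0] using (h.four (by omega)).symm
    · have hi' : (i : ℕ) + 1 ≠ n := by omega
      by_cases hj : (j : ℕ) + 1 = n
      · obtain ⟨k, hk⟩ : ∃ k, n - 2 - (i : ℕ) = k + 1 := ⟨n - 3 - i, by omega⟩
        simpa [hi', hj, hk] using (h.commute_special k (by omega)).eq.symm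
      · simpa [hi', hj] using (h.commute (n - 2 - j) (n - 2 - i) (by omega) (by omega)).eq.symm)

section Lift

variable {b : G} {c : ℕ → G} (h : IsTypeB n b c)

theorem lift_special (hn : 0 < n) : lift h (special n) = b := by
  rw [special_eq_of hn, lift, PresentedGroup.toGroup.of, if_pos (Nat.sub_add_cancel hn)]

theorem lift_braidGen {k : ℕ} (hk : k + 1 < n) : lift h (braidGen n k) = c k := by
  rw [braidGen_eq_of hk, lift, PresentedGroup.toGroup.of, if_neg (by grind)]
  congr 1
  grind

end Lift

/-- The action of the Artin group of type `Bₙ` on the free group in which the braid generators act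
by Artin's automorphisms and the special generator acts trivially. -/
def freeGroupAction (n : ℕ) : ArtinB n →* MulAut (FreeGroup ℕ) :=
  lift (isTypeB_one_artinAut n)

theorem freeGroupAction_special (hn : 0 < n) : freeGroupAction n (special n) = 1 :=
  lift_special _ hn

theorem freeGroupAction_braidGen {k : ℕ} (hk : k + 1 < n) :
    freeGroupAction n (braidGen n k) = artinAut k (k + 1) :=
  lift_braidGen _ hk

/-- The endomorphism of the Artin group of type `Bₙ` killing the special generator and fixing the
braid generators: the projection to the parabolic subgroup of type `Aₙ₋₁`. -/
def killSpecial (n : ℕ) : ArtinB n →* ArtinB n :=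
  lift (b := 1) (c := braidGen n)
    { isTypeB n with
      four := fun _ => by simp
      commute_special := fun _ _ => Commute.one_left _ }

theorem killSpecial_special (hn : 0 < n) : killSpecial n (special n) = 1 :=
  lift_special _ hn

theorem killSpecial_braidGen {k : ℕ} (hk : k + 1 < n) :
    killSpecial n (braidGen n k) = braidGen n k :=
  lift_braidGen _ hk

theorem isTypeB_inl_inr (n : ℕ) :
    IsTypeB n (SemidirectProduct.inl (FreeGroup.of 0) : FreeGroup ℕ ⋊[freeGroupAction n] ArtinB n)
      fun k => SemidirectProduct.inr (braidGen n k) where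
  four hn := by
    ext
    · simp [freeGroupAction_braidGen hn, artinAut_left, artinAut_right, mul_assoc]
    · simp
  braid i hi := by simpa using congrArg SemidirectProduct.inr ((isTypeB n).braid i hi)
  commute_special j hj := by
    have hfix : artinAut (j + 1) (j + 2) (FreeGroup.of 0) = FreeGroup.of 0 :=
      artinAut_of_ne (by omega) (by omega)
    ext <;> simp [freeGroupAction_braidGen hj, hfix]
  commute i j hij hj := ((isTypeB n).commute i j hij hj).map SemidirectProduct.inr

/-- The homomorphism to the semidirect product sending the special generator to the basis element
`x_0` and fixing the braid generators. The classical decomposition of `A[Bₙ]` as a semidirect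
product of a free group and `A[Aₙ₋₁]` is its image; taking `A[Bₙ]` as the acting group avoids
introducing `A[Aₙ₋₁]`. -/
def toSemidirect (n : ℕ) : ArtinB n →* FreeGroup ℕ ⋊[freeGroupAction n] ArtinB n :=
  lift (isTypeB_inl_inr n)

theorem toSemidirect_special (hn : 0 < n) :
    toSemidirect n (special n) = SemidirectProduct.inl (FreeGroup.of 0) :=
  lift_special _ hn

theorem toSemidirect_braidGen {k : ℕ} (hk : k + 1 < n) :
    toSemidirect n (braidGen n k) = SemidirectProduct.inr (braidGen n k) :=
  lift_braidGen _ hk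

theorem conjHom_freeGroupAction (n : ℕ) (g : ArtinB n) (x : FreeGroup ℕ) :
    conjHom n (special n) (braidGen n) (freeGroupAction n g x) =
      killSpecial n g * conjHom n (special n) (braidGen n) x * (killSpecial n g)⁻¹ := by
  refine equivariant_of_closure_eq_top (closure_special_braidGen n) ?_ g x
  rintro _ (rfl | ⟨k, hk, rfl⟩) x
  · rcases n.eq_zero_or_pos with rfl | hn
    · simp [special, rB]
    · simp [freeGroupAction_special hn, killSpecial_special hn]
  · rw [freeGroupAction_braidGen hk, killSpecial_braidGen hk, (isTypeB n).conjHom_artinAut hk]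

/-- The retraction of the semidirect product onto the Artin group of type `Bₙ`, a left inverse of
`toSemidirect`. -/
def ofSemidirect (n : ℕ) : FreeGroup ℕ ⋊[freeGroupAction n] ArtinB n →* ArtinB n :=
  SemidirectProduct.lift (conjHom n (special n) (braidGen n)) (killSpecial n) fun g =>
    MonoidHom.ext (conjHom_freeGroupAction n g)

theorem ofSemidirect_comp_toSemidirect (hn : 0 < n) :
    (ofSemidirect n).comp (toSemidirect n) = MonoidHom.id _ := by
  refine hom_ext ?_ fun k hk => ?_
  · simp [toSemidirect_special hn, ofSemidirect, conjHom_of hn, conjSeq]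
  · simp [toSemidirect_braidGen hk, ofSemidirect, killSpecial_braidGen hk]

theorem toSemidirect_injective (hn : 0 < n) : Function.Injective (toSemidirect n) :=
  Function.LeftInverse.injective (g := ofSemidirect n) fun x =>
    DFunLike.congr_fun (ofSemidirect_comp_toSemidirect hn) x

theorem rightHom_comp_toSemidirect (hn : 0 < n) :
    SemidirectProduct.rightHom.comp (toSemidirect n) = killSpecial n := by
  refine hom_ext ?_ fun k hk => ?_
  · simp [toSemidirect_special hn, killSpecial_special hn]
  · simp [toSemidirect_braidGen hk, killSpecial_braidGen hk]

theorem exists_toSemidirect_eq_inl (hn : 0 < n) {u : ArtinB n} (hu : killSpecial n u = 1) :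
    ∃ f, toSemidirect n u = SemidirectProduct.inl f := by
  have hker : toSemidirect n u ∈ SemidirectProduct.rightHom.ker := by
    rw [MonoidHom.mem_ker, ← MonoidHom.comp_apply, rightHom_comp_toSemidirect hn, hu]
  rw [← SemidirectProduct.range_inl_eq_ker_rightHom] at hker
  obtain ⟨f, hf⟩ := hker
  exact ⟨f, hf.symm⟩

open scoped commutatorElement

theorem toSemidirect_commutator (hn : 2 ≤ n) :
    toSemidirect n ⁅special n, braidGen n 0⁆ =
      SemidirectProduct.inl (FreeGroup.of 0 * (FreeGroup.of 1)⁻¹) := by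
  rw [map_commutatorElement, toSemidirect_special (by omega), toSemidirect_braidGen hn,
    commutatorElement_def]
  ext <;> simp [freeGroupAction_braidGen hn, artinAut_left]

theorem eq_one_of_killSpecial_eq_one (hn : 2 ≤ n) {u : ArtinB n} (hu : killSpecial n u = 1)
    (h : Commute ⁅special n, braidGen n 0⁆ u)
    (h' : Commute ((special n)⁻¹ * ⁅special n, braidGen n 0⁆ * special n) u) : u = 1 := by
  obtain ⟨f, hf⟩ := exists_toSemidirect_eq_inl (by omega) hu
  have hcomm := h.map (toSemidirect n)
  have hcomm' := h'.map (toSemidirect n)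
  rw [hf, toSemidirect_commutator hn] at hcomm
  rw [hf, map_mul, map_mul, map_inv, toSemidirect_commutator hn, toSemidirect_special (by omega),
    ← map_inv, ← map_mul, ← map_mul, inv_mul_cancel_left] at hcomm'
  have hf1 : f = 1 := eq_one_of_commute_of_mul_inv zero_ne_one
    (hcomm.of_map SemidirectProduct.inl_injective) (hcomm'.of_map SemidirectProduct.inl_injective)
  exact toSemidirect_injective (by omega) (by rw [hf, hf1, map_one, map_one])

theorem mem_center_of_commute {g : ArtinB n} (hspecial : Commute (special n) g)
    (hbraid : ∀ k, k + 1 < n → Commute (braidGen n k) g) : g ∈ Subgroup.center (ArtinB n) := by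
  have hle : ⊤ ≤ Subgroup.centralizer {g} := by
    rw [← closure_special_braidGen, Subgroup.closure_le]
    rintro _ (rfl | ⟨k, hk, rfl⟩)
    · exact Subgroup.mem_centralizer_singleton_iff.2 hspecial.eq
    · exact Subgroup.mem_centralizer_singleton_iff.2 (hbraid k hk).eq
  exact Subgroup.mem_center_iff.2 fun x =>
    Subgroup.mem_centralizer_singleton_iff.1 (hle (Subgroup.mem_top x))

/-- The copy of the Artin group of type `Ãₙ₋₁` in `ArtinB n`. The generator `t_0` is replaced by
`r_n r_{n-1} r_n⁻¹`, its conjugate by `t_1 ⋯ t_{n-1}`; see `closure_tB_eq_tildeA`. -/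
def tildeA (n : ℕ) : Subgroup (ArtinB n) :=
  Subgroup.closure
    (insert (special n * braidGen n 0 * (special n)⁻¹) (braidGen n '' {k | k + 1 < n}))

theorem special_conj_mem_tildeA (n : ℕ) :
    special n * braidGen n 0 * (special n)⁻¹ ∈ tildeA n :=
  Subgroup.subset_closure (Set.mem_insert _ _)

theorem braidGen_mem_tildeA {k : ℕ} (hk : k + 1 < n) : braidGen n k ∈ tildeA n :=
  Subgroup.subset_closure (Set.mem_insert_of_mem _ ⟨k, hk, rfl⟩)

theorem special_mem_normalizer_tildeA (hn : 2 ≤ n) :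
    special n ∈ Subgroup.normalizer (tildeA n : Set (ArtinB n)) := by
  have hfour := ((isTypeB n).four hn).symm
  have hzero := braidGen_mem_tildeA hn
  have hconj := special_conj_mem_tildeA n
  refine mem_normalizer_closure ?_ ?_ <;> rintro _ (rfl | ⟨_ | k, hk, rfl⟩)
  · rw [conj_conj_of_four hfour]
    exact mul_mem (mul_mem (inv_mem hconj) hzero) hconj
  · exact hconj
  · rw [((isTypeB n).commute_special k hk).eq, mul_inv_cancel_right]
    exact braidGen_mem_tildeA hk
  · change _ ∈ tildeA n
    simpa [mul_assoc] using hzero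
  · rw [inv_conj_of_four hfour]
    exact mul_mem (mul_mem hzero hconj) (inv_mem hzero)
  · rw [((isTypeB n).commute_special k hk).inv_left.eq, inv_mul_cancel_right]
    exact braidGen_mem_tildeA hk

theorem normal_tildeA (hn : 2 ≤ n) : (tildeA n).Normal := by
  rw [← Subgroup.normalizer_eq_top_iff, eq_top_iff, ← closure_special_braidGen,
    Subgroup.closure_le]
  rintro _ (rfl | ⟨k, hk, rfl⟩)
  · exact special_mem_normalizer_tildeA hn
  · exact Subgroup.le_normalizer (braidGen_mem_tildeA hk)

theorem tB_zero_eq_conj (hn : 0 < n) :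
    tB n 0 = ρ₀B n * (special n * braidGen n 0 * (special n)⁻¹) * (ρ₀B n)⁻¹ := by
  obtain ⟨m, rfl⟩ := Nat.exists_eq_add_of_le' hn
  simp [tB, ρB, ρ₀B, special, braidGen, List.range_succ, mul_assoc]

theorem tB_eq_braidGen {i : ℕ} (hi : 0 < i) (hin : i < n) : tB n i = braidGen n (n - 1 - i) := by
  rw [tB, Nat.mod_eq_of_lt hin, if_neg hi.ne', rB_eq_braidGen hin]

theorem ρ₀B_mem_closure (n : ℕ) :
    ρ₀B n ∈ Subgroup.closure (braidGen n '' {k | k + 1 < n}) := by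
  refine Subgroup.list_prod_mem _ fun x hx => ?_
  obtain ⟨i, hi, rfl⟩ := List.mem_map.1 hx
  rw [List.mem_range] at hi
  rw [rB_eq_braidGen (by omega)]
  exact Subgroup.subset_closure ⟨_, show _ < n by omega, rfl⟩

theorem closure_tB_eq_tildeA (hn : 0 < n) :
    Subgroup.closure {x | ∃ i < n, x = tB n i} = tildeA n := by
  have hbraid : Subgroup.closure (braidGen n '' {k | k + 1 < n}) ≤
      Subgroup.closure {x | ∃ i < n, x = tB n i} := by
    rw [Subgroup.closure_le]
    rintro _ ⟨k, hk, rfl⟩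
    rw [Set.mem_ofPred_eq] at hk
    refine Subgroup.subset_closure ⟨n - 1 - k, by omega, ?_⟩
    rw [tB_eq_braidGen (by omega) (by omega), Nat.sub_sub_self (by omega)]
  have hbraid' : Subgroup.closure (braidGen n '' {k | k + 1 < n}) ≤ tildeA n :=
    Subgroup.closure_mono (Set.subset_insert _ _)
  apply le_antisymm
  · rw [Subgroup.closure_le]
    rintro _ ⟨i, hi, rfl⟩
    rcases i.eq_zero_or_pos with rfl | hi0
    · rw [tB_zero_eq_conj hn]
      have hρ := hbraid' (ρ₀B_mem_closure n)
      exact mul_mem (mul_mem hρ (special_conj_mem_tildeA n)) (inv_mem hρ)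
    · rw [tB_eq_braidGen hi0 hi]
      exact braidGen_mem_tildeA (by omega)
  · rw [tildeA, Subgroup.closure_le, Set.insert_subset_iff]
    refine ⟨?_, Subgroup.subset_closure.trans hbraid⟩
    have hρ := hbraid (ρ₀B_mem_closure n)
    have hzero : tB n 0 ∈ Subgroup.closure {x | ∃ i < n, x = tB n i} :=
      Subgroup.subset_closure ⟨0, hn, rfl⟩
    rw [tB_zero_eq_conj hn] at hzero
    simpa [mul_assoc] using mul_mem (mul_mem (inv_mem hρ) hzero) hρ

theorem commute_special_of_mem_centralizer (hn : 2 ≤ n) {g : ArtinB n}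
    (hg : g ∈ Subgroup.centralizer (tildeA n : Set (ArtinB n))) : Commute (special n) g := by
  have := normal_tildeA hn
  have hcomm : ⁅g, special n⁆ ∈ Subgroup.centralizer (tildeA n : Set (ArtinB n)) := by
    rw [commutatorElement_def, mul_assoc, mul_assoc, ← mul_assoc (special n)]
    exact mul_mem hg (Subgroup.Normal.conj_mem inferInstance _ (inv_mem hg) _)
  have hkill : killSpecial n ⁅g, special n⁆ = 1 := by
    rw [map_commutatorElement, killSpecial_special (by omega), commutatorElement_one_right]
  have hmem : ⁅special n, braidGen n 0⁆ ∈ tildeA n :=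
    mul_mem (special_conj_mem_tildeA n) (inv_mem (braidGen_mem_tildeA hn))
  have hmem' : (special n)⁻¹ * ⁅special n, braidGen n 0⁆ * special n ∈ tildeA n :=
    Subgroup.Normal.conj_mem' inferInstance _ hmem _
  have hone : ⁅g, special n⁆ = 1 :=
    eq_one_of_killSpecial_eq_one hn hkill (hcomm _ hmem) (hcomm _ hmem')
  exact (commutatorElement_eq_one_iff_commute.1 hone).symm

theorem centralizer_tildeA (hn : 2 ≤ n) :
    Subgroup.centralizer (tildeA n : Set (ArtinB n)) = Subgroup.center (ArtinB n) :=
  le_antisymm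
    (fun _ hg => mem_center_of_commute (commute_special_of_mem_centralizer hn hg) fun _ hk =>
      hg _ (braidGen_mem_tildeA hk))
    (Subgroup.center_le_centralizer _)

end ArtinB

theorem centralizer_tilde_A_eq_center_general (n : ℕ) (hn : 2 ≤ n) :
    Subgroup.centralizer
        ((Subgroup.closure {x | ∃ i < n, x = tB n i} : Subgroup (ArtinB n)) :
          Set (ArtinB n)) =
      Subgroup.center (ArtinB n) := by
  rw [ArtinB.closure_tB_eq_tildeA (by omega), ArtinB.centralizer_tildeA hn]

/-- the centralizer in `A[Bₙ]` of the subgroup generated by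
`t_0, …, t_{n-1}` (a copy of `A[Ã_{n-1}]`) equals the center of `A[Bₙ]`, `n ≥ 5`. -/
theorem centralizer_tilde_A_eq_center (n : ℕ) (hn : 5 ≤ n) :
    Subgroup.centralizer
        ((Subgroup.closure {x | ∃ i < n, x = tB n i} : Subgroup (ArtinB n)) :
          Set (ArtinB n)) =
      Subgroup.center (ArtinB n) := by
  exact centralizer_tilde_A_eq_center_general n (by omega)
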